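/- arXiv:2006.07531 — 3 statements merged into one kernel-verified Lean document; each statement's English description precedes it below -/
import Mathlib

section
/- Let p ≥ 3 be a prime. In G = DihedralGroup p × DihedralGroup p with s₁ = (sr 0, 1), s₂ = (1, sr 0), r₁ = (r 1, 1), r₂ = (1, r 1), the subgroup generated by the set {s₁, s₂, r₁r₂} is all of G. -/
/-!
Conjugation by `s₁` inverts `r₁` and fixes `r₂`, so the commutator of `r₁ r₂` with `s₁` is `r₁ ^ 2`.
Since `r₁` has odd order, it is a power of `r₁ ^ 2`. Hence the subgroup contains `r₁`, then also
`r₂ = r₁⁻¹ (r₁ r₂)`, and so generators of both factors.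
-/

open scoped commutatorElement

section Group

variable {G K : Type*} [Group G] [Group K]

theorem commutatorElement_eq_sq_of_conj_eq_inv {a x : G} (hax : a * x * a⁻¹ = x⁻¹) :
    ⁅x, a⁆ = x ^ 2 := by
  have hinv : a * x⁻¹ * a⁻¹ = x := by rw [← conj_inv, hax, inv_inv]
  calc ⁅x, a⁆ = x * (a * x⁻¹ * a⁻¹) := by simp only [commutatorElement_def, mul_assoc]
    _ = x ^ 2 := by rw [hinv, sq]

theorem mk_commutatorElement_one_mem {H : Subgroup (G × K)} {a x : G} {y : K}
    (ha : (a, 1) ∈ H) (hxy : (x, y) ∈ H) : (⁅x, a⁆, 1) ∈ H := by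
  have hcomm : ⁅(x, y), (a, 1)⁆ ∈ H :=
    H.mul_mem (H.mul_mem (H.mul_mem hxy ha) (H.inv_mem hxy)) (H.inv_mem ha)
  simpa [commutatorElement_def] using hcomm

theorem mk_one_mem_of_conj_eq_inv {H : Subgroup (G × K)} {a x : G} {y : K}
    (hx : Odd (orderOf x)) (hax : a * x * a⁻¹ = x⁻¹) (ha : (a, 1) ∈ H) (hxy : (x, y) ∈ H) :
    (x, 1) ∈ H := by
  have hsq : x ^ 2 ∈ H.comap (MonoidHom.inl G K) := by
    rw [← commutatorElement_eq_sq_of_conj_eq_inv hax]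
    exact mk_commutatorElement_one_mem ha hxy
  have hx_mem : x ∈ Subgroup.zpowers (x ^ 2) := mem_zpowers_pow_iff.2 hx.coprime_two_left
  exact Subgroup.zpowers_le_of_mem hsq hx_mem

theorem eq_top_of_inl_mem_of_inr_mem {H : Subgroup (G × K)} {S : Set G} {T : Set K}
    (hS : Subgroup.closure S = ⊤) (hT : Subgroup.closure T = ⊤)
    (hSH : ∀ g ∈ S, (g, 1) ∈ H) (hTH : ∀ k ∈ T, (1, k) ∈ H) : H = ⊤ := by
  rw [eq_top_iff, ← Subgroup.top_prod_top, Subgroup.prod_le_iff, Subgroup.map_le_iff_le_comap,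
    Subgroup.map_le_iff_le_comap, ← hS, ← hT, Subgroup.closure_le, Subgroup.closure_le]
  exact ⟨hSH, hTH⟩

theorem closure_mk_one_one_mk_mk_eq_top {a x : G} {b y : K}
    (hx : Odd (orderOf x)) (hax : a * x * a⁻¹ = x⁻¹)
    (hG : Subgroup.closure {a, x} = ⊤) (hK : Subgroup.closure {b, y} = ⊤) :
    Subgroup.closure {(a, 1), (1, b), (x, y)} = ⊤ := by
  set H : Subgroup (G × K) := Subgroup.closure {(a, 1), (1, b), (x, y)}
  have ha : (a, 1) ∈ H := Subgroup.subset_closure (by simp)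
  have hb : (1, b) ∈ H := Subgroup.subset_closure (by simp)
  have hxy : (x, y) ∈ H := Subgroup.subset_closure (by simp)
  have hx_mem : (x, 1) ∈ H := mk_one_mem_of_conj_eq_inv hx hax ha hxy
  have hy_mem : (1, y) ∈ H := by simpa using H.mul_mem (H.inv_mem hx_mem) hxy
  exact eq_top_of_inl_mem_of_inr_mem hG hK (by simp [ha, hx_mem]) (by simp [hb, hy_mem])

end Group

section Dihedral

open DihedralGroup

variable {n : ℕ}

theorem sr_mul_r_mul_inv_sr (i j : ZMod n) : sr i * r j * (sr i)⁻¹ = (r j)⁻¹ := by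
  simp

theorem closure_sr_r_one_eq_top (i : ZMod n) :
    Subgroup.closure {sr i, r 1} = (⊤ : Subgroup (DihedralGroup n)) := by
  set H : Subgroup (DihedralGroup n) := Subgroup.closure {sr i, r 1}
  have hsr : sr i ∈ H := Subgroup.subset_closure (by simp)
  have hr_one : r 1 ∈ H := Subgroup.subset_closure (by simp)
  have hr (j : ZMod n) : r j ∈ H := by
    obtain ⟨k, rfl⟩ := ZMod.intCast_surjective j
    simpa only [r_one_zpow] using H.zpow_mem hr_one k
  refine (Subgroup.eq_top_iff' H).2 ?_
  rintro (j | j)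
  · exact hr j
  · simpa using H.mul_mem hsr (hr (j - i))

end Dihedral

theorem stmt_5_general {m n : ℕ} (hm : Odd m)
    {s₁ s₂ r₁ r₂ : DihedralGroup m × DihedralGroup n}
    (hs₁ : s₁ = (DihedralGroup.sr 0, 1)) (hs₂ : s₂ = (1, DihedralGroup.sr 0))
    (hr₁ : r₁ = (DihedralGroup.r 1, 1)) (hr₂ : r₂ = (1, DihedralGroup.r 1)) :
    Subgroup.closure {s₁, s₂, r₁ * r₂} = ⊤ := by
  have horder : Odd (orderOf (DihedralGroup.r 1 : DihedralGroup m)) := by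
    rwa [DihedralGroup.orderOf_r_one]
  rw [hs₁, hs₂, hr₁, hr₂, Prod.mk_mul_mk, mul_one, one_mul]
  exact closure_mk_one_one_mk_mk_eq_top horder (sr_mul_r_mul_inv_sr 0 1)
    (closure_sr_r_one_eq_top 0) (closure_sr_r_one_eq_top 0)

theorem stmt_5 (p : ℕ) (hp : p.Prime) (hp3 : 3 ≤ p)
    (s₁ s₂ r₁ r₂ : DihedralGroup p × DihedralGroup p)
    (hs₁ : s₁ = (DihedralGroup.sr 0, 1)) (hs₂ : s₂ = (1, DihedralGroup.sr 0))
    (hr₁ : r₁ = (DihedralGroup.r 1, 1)) (hr₂ : r₂ = (1, DihedralGroup.r 1)) :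
    Subgroup.closure {s₁, s₂, r₁ * r₂} = ⊤ :=
  stmt_5_general (hp.odd_of_ne_two (by lia)) hs₁ hs₂ hr₁ hr₂
end

section
/- Let p ≥ 3 be a prime and let d ≥ 2 be an even integer. In G = DihedralGroup p × DihedralGroup p with s₁ = (sr 0, 1), s₂ = (1, sr 0), r₁ = (r 1, 1), r₂ = (1, r 1), the product s₁ · s₂ · (s₁s₂(r₁r₂)^{−d/2}) · ∏_{i=4}^{d+3} x_i equals 1, where x_i = r₁ when i is even and x_i = r₂ when i is odd. -/
theorem prod_map_range_ite_even {M : Type*} [Monoid M] (a b : M) (k : ℕ) :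
    ((List.range (2 * k)).map fun j => if Even j then a else b).prod = (a * b) ^ k := by
  induction k with
  | zero => simp
  | succ k ih =>
    have hodd : ¬ Even (2 * k + 1) := Nat.not_even_two_mul_add_one k
    rw [Nat.mul_succ, List.prod_range_succ, List.prod_range_succ, ih, if_pos (even_two_mul k),
      if_neg hodd, mul_assoc, pow_succ]

theorem stmt_7_general {G : Type*} [Group G] {s₁ s₂ : G} (hs : (s₁ * s₂) ^ 2 = 1) (r₁ r₂ : G)
    {d : ℕ} (hd : Even d) :
    s₁ * s₂ * (s₁ * s₂ * (r₁ * r₂) ^ (-((d : ℤ) / 2))) *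
      ((List.range d).map (fun j => if Even (j + 4) then r₁ else r₂)).prod = 1 := by
  obtain ⟨k, rfl⟩ := hd.two_dvd
  have even_shift (j : ℕ) : Even (j + 4) ↔ Even j := by grind
  have half : ((2 * k : ℕ) : ℤ) / 2 = k := by omega
  simp only [even_shift, half]
  calc s₁ * s₂ * (s₁ * s₂ * (r₁ * r₂) ^ (-(k : ℤ))) *
        ((List.range (2 * k)).map fun j => if Even j then r₁ else r₂).prod
      = (s₁ * s₂) ^ 2 * ((r₁ * r₂) ^ k)⁻¹ * (r₁ * r₂) ^ k := by
        rw [prod_map_range_ite_even, zpow_neg, zpow_natCast, pow_two (s₁ * s₂),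
          mul_assoc (s₁ * s₂) (s₁ * s₂)]
    _ = 1 := by rw [inv_mul_cancel_right, hs]

theorem stmt_7 (p : ℕ) (hp : p.Prime) (hp3 : 3 ≤ p)
    (d : ℕ) (hd2 : 2 ≤ d) (hdeven : Even d)
    (s₁ s₂ r₁ r₂ : DihedralGroup p × DihedralGroup p)
    (hs₁ : s₁ = (DihedralGroup.sr 0, 1)) (hs₂ : s₂ = (1, DihedralGroup.sr 0))
    (hr₁ : r₁ = (DihedralGroup.r 1, 1)) (hr₂ : r₂ = (1, DihedralGroup.r 1)) :
    s₁ * s₂ * (s₁ * s₂ * (r₁ * r₂) ^ (-((d : ℤ) / 2))) *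
      ((List.range d).map (fun j => if Even (j + 4) then r₁ else r₂)).prod = 1 := by
  have hs : (s₁ * s₂) ^ 2 = 1 := by simp [hs₁, hs₂, pow_two]
  exact stmt_7_general hs r₁ r₂ hdeven
end

section
/- Let p ≥ 3 be a prime. In G = DihedralGroup p × DihedralGroup p with s₁ = (sr 0, 1), s₂ = (1, sr 0), r₁ = (r 1, 1), r₂ = (1, r 1), the element r₁² lies in the subgroup generated by {s₁, r₁r₂}, and since p is odd, ⟨r₁²⟩ = ⟨r₁⟩; consequently r₁ and r₂ both lie in the subgroup generated by {s₁, r₁r₂}. -/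
/-!
Conjugation by `s` inverts `a` and fixes `b`, so it sends `a * b` to `a⁻¹ * b`; dividing `a * b` by
this conjugate cancels `b` and leaves `a ^ 2`. When `a` has odd order it is a power of its square.
-/

section Group

variable {G : Type*} [Group G] {s a b : G}

theorem zpowers_pow_eq_zpowers_iff {k : ℕ} :
    Subgroup.zpowers (a ^ k) = Subgroup.zpowers a ↔ k.Coprime (orderOf a) := by
  rw [Nat.Coprime, ← mem_zpowers_pow_iff, ← Subgroup.zpowers_le]
  have hle : Subgroup.zpowers (a ^ k) ≤ Subgroup.zpowers a :=
    Subgroup.zpowers_le.2 (Subgroup.npow_mem_zpowers a k)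
  exact ⟨fun h ↦ h.ge, hle.antisymm⟩

theorem mul_mul_conj_mul_inv_eq_sq (hsa : SemiconjBy s a a⁻¹) (hsb : Commute s b) :
    a * b * (s * (a * b) * s⁻¹)⁻¹ = a ^ 2 := by
  have hconj : s * (a * b) * s⁻¹ = a⁻¹ * b :=
    mul_inv_eq_of_eq_mul (hsa.mul_right hsb).eq
  rw [hconj, mul_inv_rev, inv_inv, mul_assoc, mul_inv_cancel_left, sq]

theorem sq_mem_of_semiconjBy_inv {H : Subgroup G} (hsa : SemiconjBy s a a⁻¹) (hsb : Commute s b)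
    (hs : s ∈ H) (hab : a * b ∈ H) : a ^ 2 ∈ H := by
  rw [← mul_mul_conj_mul_inv_eq_sq hsa hsb]
  exact mul_mem hab (inv_mem (mul_mem (mul_mem hs hab) (inv_mem hs)))

theorem stmt_16_general (hsa : SemiconjBy s a a⁻¹) (hsb : Commute s b) (ha : Odd (orderOf a)) :
    a ^ 2 ∈ Subgroup.closure {s, a * b} ∧
    Subgroup.zpowers (a ^ 2) = Subgroup.zpowers a ∧
    a ∈ Subgroup.closure {s, a * b} ∧
    b ∈ Subgroup.closure {s, a * b} := by
  have hs : s ∈ Subgroup.closure {s, a * b} := Subgroup.mem_closure_of_mem (.inl rfl)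
  have hab : a * b ∈ Subgroup.closure {s, a * b} := Subgroup.mem_closure_of_mem (.inr rfl)
  have hsq : a ^ 2 ∈ Subgroup.closure {s, a * b} := sq_mem_of_semiconjBy_inv hsa hsb hs hab
  have hzpowers : Subgroup.zpowers (a ^ 2) = Subgroup.zpowers a :=
    zpowers_pow_eq_zpowers_iff.2 ha.coprime_two_left
  have ha_mem : a ∈ Subgroup.closure {s, a * b} :=
    Subgroup.zpowers_le.1 (hzpowers ▸ Subgroup.zpowers_le.2 hsq)
  exact ⟨hsq, hzpowers, ha_mem, (Subgroup.mul_mem_cancel_left _ ha_mem).1 hab⟩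

end Group

theorem semiconjBy_sr_r_inv {n : ℕ} (i j : ZMod n) :
    SemiconjBy (DihedralGroup.sr i) (DihedralGroup.r j) (DihedralGroup.r j)⁻¹ := by
  rw [SemiconjBy, DihedralGroup.inv_r, DihedralGroup.sr_mul_r, DihedralGroup.r_mul_sr,
    sub_neg_eq_add]

theorem stmt_16 (p : ℕ) (hp : p.Prime) (hp3 : 3 ≤ p)
    (s₁ s₂ r₁ r₂ : DihedralGroup p × DihedralGroup p)
    (hs₁ : s₁ = (DihedralGroup.sr 0, 1)) (hs₂ : s₂ = (1, DihedralGroup.sr 0))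
    (hr₁ : r₁ = (DihedralGroup.r 1, 1)) (hr₂ : r₂ = (1, DihedralGroup.r 1)) :
    r₁ ^ 2 ∈ Subgroup.closure {s₁, r₁ * r₂} ∧
    Subgroup.zpowers (r₁ ^ 2) = Subgroup.zpowers r₁ ∧
    r₁ ∈ Subgroup.closure {s₁, r₁ * r₂} ∧
    r₂ ∈ Subgroup.closure {s₁, r₁ * r₂} := by
  have hr₁_odd : Odd (orderOf r₁) := by
    simpa [hr₁, Prod.orderOf_mk] using hp.odd_of_ne_two (by lia)
  subst hs₁ hr₁ hr₂
  exact stmt_16_general (.prod (semiconjBy_sr_r_inv 0 1) (by simp))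
    (.prod (.one_right _) (.one_left _)) hr₁_odd
end
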